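/- Let |M| = |W| = 3 and let ψ be the uniform distribution over the (3!)^6 preference profiles in which every agent ranks being unmatched last (i.e., each agent's ranking of the three agents on the other side is an independent uniform permutation). Then no mechanism φ is interim stable at ψ. -/

import Mathlib

open scoped ENNReal

namespace Unraveling

variable (M W : Type*) [Fintype M] [DecidableEq M] [Fintype W] [DecidableEq W]

/-- A matching between men `M` and women `W`.  `Sum.inl m` denotes man `m`,
`Sum.inr w` denotes woman `w`; `toFun a = a` means agent `a` is unmatched. -/
structure Matching where
  toFun : M ⊕ W → M ⊕ W
  man_range : ∀ m : M, toFun (Sum.inl m) = Sum.inl m ∨ ∃ w : W, toFun (Sum.inl m) = Sum.inr w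
  woman_range : ∀ w : W, toFun (Sum.inr w) = Sum.inr w ∨ ∃ m : M, toFun (Sum.inr w) = Sum.inl m
  mutual_cond : ∀ (m : M) (w : W), toFun (Sum.inl m) = Sum.inr w ↔ toFun (Sum.inr w) = Sum.inl m

/-- A preference profile: each man has a ranking (a bijection onto `{1,…,|W|+1}`,
encoded as an `Equiv` onto `Fin (|W|+1)`) of the women together with the option
(`none`) of remaining unmatched, and symmetrically for women. -/
structure Profile where
  mpref : M → (Option W ≃ Fin (Fintype.card W + 1))
  wpref : W → (Option M ≃ Fin (Fintype.card M + 1))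

variable {M W}

/-- The partner of man `m` under matching `μ` (`none` if unmatched). -/
def Matching.partnerM (μ : Matching M W) (m : M) : Option W :=
  match μ.toFun (Sum.inl m) with
  | Sum.inl _ => none
  | Sum.inr w => some w

/-- The partner of woman `w` under matching `μ` (`none` if unmatched). -/
def Matching.partnerW (μ : Matching M W) (w : W) : Option M :=
  match μ.toFun (Sum.inr w) with
  | Sum.inr _ => none
  | Sum.inl m => some m

/-- The rank (`1` = most preferred) that man `m` assigns to `o` under profile `P`. -/
def mrank (P : Profile M W) (m : M) (o : Option W) : ℕ := (P.mpref m o : ℕ) + 1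

/-- The rank (`1` = most preferred) that woman `w` assigns to `o` under profile `P`. -/
def wrank (P : Profile M W) (w : W) (o : Option M) : ℕ := (P.wpref w o : ℕ) + 1

/-- The rank that agent `a` assigns to his/her partner under matching `μ`. -/
def prank (P : Profile M W) (μ : Matching M W) : M ⊕ W → ℕ
  | Sum.inl m => mrank P m (μ.partnerM m)
  | Sum.inr w => wrank P w (μ.partnerW w)

/-- The rank that agent `a` assigns to remaining unmatched. -/
def urank (P : Profile M W) : M ⊕ W → ℕ
  | Sum.inl m => mrank P m none
  | Sum.inr w => wrank P w none

/-- Stability of a matching at a profile. -/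
def IsStable (P : Profile M W) (μ : Matching M W) : Prop :=
  (∀ a : M ⊕ W, prank P μ a ≤ urank P a) ∧
  (∀ (m : M) (w : W), mrank P m (some w) < prank P μ (Sum.inl m) →
     prank P μ (Sum.inr w) < wrank P w (some m))

/-- A mechanism maps each preference profile to a probability distribution over matchings. -/
abbrev Mechanism (M W : Type*) [Fintype M] [DecidableEq M] [Fintype W] [DecidableEq W] :=
  Profile M W → PMF (Matching M W)

/-- The probability that `p` assigns to the set `s`. -/
noncomputable def prob {α : Type*} (p : PMF α) (s : Set α) : ℝ≥0∞ :=
  ∑' x, s.indicator (fun y => p y) x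

/-- CDF of the rank that agent `a` assigns to his/her random partner, when the
matching is drawn from `p` and the profile is `P`. -/
noncomputable def cdfAt (P : Profile M W) (p : PMF (Matching M W)) (a : M ⊕ W) (n : ℕ) : ℝ≥0∞ :=
  prob p {μ | prank P μ a ≤ n}

/-- `SD F G` : the rank distribution with CDF `F` strictly first-order
stochastically dominates the one with CDF `G`. -/
def SD (F G : ℕ → ℝ≥0∞) : Prop := (∀ n, G n ≤ F n) ∧ ∃ n, G n < F n

/-- A coalition consisting of at most one man and at most one woman. -/
def IsPairCoalition (A' : Set (M ⊕ W)) : Prop :=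
  {m : M | Sum.inl m ∈ A'}.Subsingleton ∧ {w : W | Sum.inr w ∈ A'}.Subsingleton

/-- Coalition `A'` blocks mechanism `φ` ex-post at profile `P`. -/
def BlocksExPost (A' : Set (M ⊕ W)) (φ : Mechanism M W) (P : Profile M W) : Prop :=
  A'.Nonempty ∧ ∃ φ' : Mechanism M W,
    (∀ a ∈ A', prob (φ' P) {μ | μ.toFun a ∈ A'} = 1) ∧
    (∀ a ∈ A', SD (cdfAt P (φ' P) a) (cdfAt P (φ P) a))

def ExPostStable (φ : Mechanism M W) : Prop :=
  ∀ (P : Profile M W) (A' : Set (M ⊕ W)), ¬ BlocksExPost A' φ P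

def ExPostPairwiseStable (φ : Mechanism M W) : Prop :=
  ∀ (P : Profile M W) (A' : Set (M ⊕ W)), IsPairCoalition A' → ¬ BlocksExPost A' φ P

/-- Ex-ante CDF of the rank of agent `a`'s partner under mechanism `φ`, when
the profile is drawn from prior `ψ`. -/
noncomputable def cdfExAnte (ψ : PMF (Profile M W)) (φ : Mechanism M W) (a : M ⊕ W) (n : ℕ) : ℝ≥0∞ :=
  ∑' P, ψ P * cdfAt P (φ P) a n

/-- Coalition `A'` blocks mechanism `φ` ex-ante at prior `ψ`. -/
def BlocksExAnte (A' : Set (M ⊕ W)) (φ : Mechanism M W) (ψ : PMF (Profile M W)) : Prop :=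
  A'.Nonempty ∧ ∃ φ' : Mechanism M W,
    (∀ a ∈ A', (∑' P, ψ P * prob (φ' P) {μ | μ.toFun a ∈ A'}) = 1) ∧
    (∀ a ∈ A', SD (cdfExAnte ψ φ' a) (cdfExAnte ψ φ a))

def ExAnteStableAt (φ : Mechanism M W) (ψ : PMF (Profile M W)) : Prop :=
  ∀ A' : Set (M ⊕ W), ¬ BlocksExAnte A' φ ψ

def ExAnteStable (φ : Mechanism M W) : Prop := ∀ ψ, ExAnteStableAt φ ψ

def ExAntePairwiseStable (φ : Mechanism M W) : Prop :=
  ∀ (ψ : PMF (Profile M W)) (A' : Set (M ⊕ W)), IsPairCoalition A' → ¬ BlocksExAnte A' φ ψ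

/-- `prefEq P P' a` : profiles `P` and `P'` give agent `a` the same preferences. -/
def prefEq (P P' : Profile M W) : M ⊕ W → Prop
  | Sum.inl m => P.mpref m = P'.mpref m
  | Sum.inr w => P.wpref w = P'.wpref w

/-- The event `Y_a(P̃_a)`: profiles in which `a`'s preferences agree with `Pt`
and every other member of the coalition `A'` has preferences in his/her
acceptance set `R`. -/
def interimEvent (A' : Set (M ⊕ W)) (R : (M ⊕ W) → Set (Profile M W)) (a : M ⊕ W)
    (Pt : Profile M W) : Set (Profile M W) :=
  {P | prefEq P Pt a ∧ ∀ a' ∈ A', a' ≠ a → P ∈ R a'}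

/-- CDF of the rank of `a`'s partner under `φ`, with the profile drawn from `ψ`
conditioned on the event `Y`. -/
noncomputable def cdfCond (ψ : PMF (Profile M W)) (Y : Set (Profile M W)) (φ : Mechanism M W)
    (a : M ⊕ W) (n : ℕ) : ℝ≥0∞ :=
  (∑' P, Y.indicator (fun P' => ψ P' * cdfAt P' (φ P') a n) P) / prob ψ Y

/-- Coalition `A'` blocks mechanism `φ` in the interim at prior `ψ`.  Each `R a`
is the set of profiles in which `a`'s preferences are ones at which `a` agrees to
deviate; it is required to depend only on `a`'s own preferences. -/
def BlocksInterim (A' : Set (M ⊕ W)) (φ : Mechanism M W) (ψ : PMF (Profile M W)) : Prop :=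
  A'.Nonempty ∧ ∃ (φ' : Mechanism M W) (R : (M ⊕ W) → Set (Profile M W)),
    (∀ (a : M ⊕ W) (P P' : Profile M W), prefEq P P' a → (P ∈ R a ↔ P' ∈ R a)) ∧
    (∀ a ∈ A', ∀ P : Profile M W, prob (φ' P) {μ | μ.toFun a ∈ A'} = 1) ∧
    (∀ a ∈ A', ∀ Pt : Profile M W,
      Pt ∈ R a ↔ (0 < prob ψ (interimEvent A' R a Pt) ∧
        SD (cdfCond ψ (interimEvent A' R a Pt) φ' a)
           (cdfCond ψ (interimEvent A' R a Pt) φ a))) ∧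
    0 < prob ψ {P | ∀ a ∈ A', P ∈ R a}

def InterimStableAt (φ : Mechanism M W) (ψ : PMF (Profile M W)) : Prop :=
  ∀ A' : Set (M ⊕ W), ¬ BlocksInterim A' φ ψ

def InterimStable (φ : Mechanism M W) : Prop := ∀ ψ, InterimStableAt φ ψ

def InterimPairwiseStable (φ : Mechanism M W) : Prop :=
  ∀ (ψ : PMF (Profile M W)) (A' : Set (M ⊕ W)), IsPairCoalition A' → ¬ BlocksInterim A' φ ψ

/-- `MRanks P m rw ru` : man `m` assigns rank `rw w` to each woman `w` and
rank `ru` to remaining unmatched. -/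
def MRanks (P : Profile M W) (m : M) (rw : W → ℕ) (ru : ℕ) : Prop :=
  (∀ w, mrank P m (some w) = rw w) ∧ mrank P m none = ru

/-- `WRanks P w rm ru` : woman `w` assigns rank `rm m` to each man `m` and
rank `ru` to remaining unmatched. -/
def WRanks (P : Profile M W) (w : W) (rm : M → ℕ) (ru : ℕ) : Prop :=
  (∀ m, wrank P w (some m) = rm m) ∧ wrank P w none = ru

instance (P : Profile M W) (m : M) (rw : W → ℕ) (ru : ℕ) : Decidable (MRanks P m rw ru) :=
  decidable_of_iff ((∀ w, mrank P m (some w) = rw w) ∧ mrank P m none = ru) Iff.rfl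

instance (P : Profile M W) (w : W) (rm : M → ℕ) (ru : ℕ) : Decidable (WRanks P w rm ru) :=
  decidable_of_iff ((∀ m, wrank P w (some m) = rm m) ∧ wrank P w none = ru) Iff.rfl

/-- The perfect matching induced by a bijection `e : M ≃ W`. -/
def matchingOf (e : M ≃ W) : Matching M W where
  toFun a :=
    match a with
    | Sum.inl m => Sum.inr (e m)
    | Sum.inr w => Sum.inl (e.symm w)
  man_range m := Or.inr ⟨e m, rfl⟩
  woman_range w := Or.inr ⟨e.symm w, rfl⟩
  mutual_cond m w := by
    constructor
    · intro h
      simp only [Sum.inr.injEq] at h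
      simp [← h]
    · intro h
      simp only [Sum.inl.injEq] at h
      simp [← h]

/-- `P'` is the permutation of profile `P` obtained by (`σM`, `σW`):
`P_a(a') = P'_{σ(a)}(σ(a'))` for all agents `a` and all `a'` in the domain of `P_a`. -/
def IsPermutedProfile (σM : Equiv.Perm M) (σW : Equiv.Perm W) (P P' : Profile M W) : Prop :=
  (∀ m w, P'.mpref (σM m) (some (σW w)) = P.mpref m (some w)) ∧
  (∀ m, P'.mpref (σM m) none = P.mpref m none) ∧
  (∀ w m, P'.wpref (σW w) (some (σM m)) = P.wpref w (some m)) ∧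
  (∀ w, P'.wpref (σW w) none = P.wpref w none)

/-- Probability (jointly over the profile drawn from `ψ` and the internal
randomization of `φ`) that agent `a` is assigned a partner of rank exactly `k`. -/
noncomputable def probRankEq (ψ : PMF (Profile M W)) (φ : Mechanism M W) (a : M ⊕ W) (k : ℕ) : ℝ≥0∞ :=
  ∑' P, ψ P * prob (φ P) {μ | prank P μ a = k}

/-- CDF of a distribution on ranks `{1,2,3}` with probabilities `q1`, `q2`, `q3`. -/
def cdf3 (q1 q2 q3 : ℝ) (n : ℕ) : ℝ :=
  (if 1 ≤ n then q1 else 0) + (if 2 ≤ n then q2 else 0) + (if 3 ≤ n then q3 else 0)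

/-- Strict first-order stochastic dominance for real-valued rank CDFs. -/
def SDR (F G : ℕ → ℝ) : Prop := (∀ n, G n ≤ F n) ∧ ∃ n, G n < F n

end Unraveling

/-!
Suppose `φ` is interim stable. A man and a woman who rank each other first must be matched, since
otherwise the two of them block. Consider the profiles in which each side has one agent in each of
the roles `0, 1, 2, …`, agents in equal roles other than `1` rank each other first, and an agent in
role `1` ranks role `0` first and role `1` third. There `φ` matches equal roles other than `1`, so
an agent in role `0` obtains rank `1` and an agent in role `1` obtains at best rank `3`. Pairing
roles `0` and `1` with each other instead, and all other roles as before, gives these agents the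
ranks `2` and `1`. Whatever preferences an agent has, the two roles are equally likely under a
symmetric prior, so that a rank of `1` or at least `3` is replaced by a rank of `2` or `1`: the
deviation improves the lottery of every agent at every preference, and the grand coalition blocks.
-/

namespace Unraveling

section Prob

variable {α : Type*} {p : PMF α} {s : Set α}

lemma prob_eq_toOuterMeasure (p : PMF α) (s : Set α) : prob p s = p.toOuterMeasure s :=
  (p.toOuterMeasure_apply s).symm

lemma prob_eq_one_iff : prob p s = 1 ↔ p.support ⊆ s := by
  rw [prob_eq_toOuterMeasure, PMF.toOuterMeasure_apply_eq_one_iff]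

lemma prob_le_one (p : PMF α) (s : Set α) : prob p s ≤ 1 :=
  calc prob p s ≤ ∑' x, p x := ENNReal.tsum_le_tsum fun _ => Set.indicator_le_self _ _ _
    _ = 1 := p.tsum_coe

lemma prob_lt_one_iff : prob p s < 1 ↔ ¬ p.support ⊆ s := by
  rw [(prob_le_one p s).lt_iff_ne, Ne, prob_eq_one_iff]

lemma prob_pos_iff : 0 < prob p s ↔ (p.support ∩ s).Nonempty := by
  rw [prob_eq_toOuterMeasure, pos_iff_ne_zero, Ne, PMF.toOuterMeasure_apply_eq_zero_iff,
    Set.not_disjoint_iff_nonempty_inter]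

lemma prob_pure_of_mem {x : α} (h : x ∈ s) : prob (PMF.pure x) s = 1 := by
  classical rw [prob_eq_toOuterMeasure, PMF.toOuterMeasure_pure_apply, if_pos h]

lemma prob_pure_of_notMem {x : α} (h : x ∉ s) : prob (PMF.pure x) s = 0 := by
  classical rw [prob_eq_toOuterMeasure, PMF.toOuterMeasure_pure_apply, if_neg h]

lemma prob_congr {t : Set α} (h : ∀ x ∈ p.support, x ∈ s ↔ x ∈ t) : prob p s = prob p t := by
  rw [prob_eq_toOuterMeasure, prob_eq_toOuterMeasure]
  refine p.toOuterMeasure_apply_eq_of_inter_support_eq ?_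
  ext x
  exact and_congr_left (h x)

end Prob

section Matching

variable {M W : Type*}

lemma Matching.partnerM_eq_some_iff (μ : Matching M W) (m : M) (w : W) :
    μ.partnerM m = some w ↔ μ.partnerW w = some m := by
  have hM : μ.partnerM m = some w ↔ μ.toFun (Sum.inl m) = Sum.inr w := by
    rw [Matching.partnerM]; split <;> simp_all
  have hW : μ.partnerW w = some m ↔ μ.toFun (Sum.inr w) = Sum.inl m := by
    rw [Matching.partnerW]; split <;> simp_all
  rw [hM, hW, μ.mutual_cond]

lemma partnerM_matchingOf (e : M ≃ W) (m : M) : (matchingOf e).partnerM m = some (e m) := rfl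

lemma partnerW_matchingOf (e : M ≃ W) (w : W) : (matchingOf e).partnerW w = some (e.symm w) := rfl

/-- The matching in which every agent is unmatched; the threat point of a deviating coalition. -/
def emptyMatching (M W : Type*) : Matching M W where
  toFun := id
  man_range _ := Or.inl rfl
  woman_range _ := Or.inl rfl
  mutual_cond := by simp

/-- The matching whose only couple is `m` and `w`; what a deviating pair implements. -/
def pairMatching [DecidableEq M] [DecidableEq W] (m : M) (w : W) : Matching M W where
  toFun := Equiv.swap (Sum.inl m) (Sum.inr w)
  man_range m' := by by_cases h : m' = m <;> simp [h, Equiv.swap_apply_def]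
  woman_range w' := by by_cases h : w' = w <;> simp [h, Equiv.swap_apply_def]
  mutual_cond m' w' := by
    rw [← Equiv.eq_symm_apply, Equiv.symm_swap, eq_comm]

lemma partnerM_pairMatching [DecidableEq M] [DecidableEq W] (m : M) (w : W) :
    (pairMatching m w).partnerM m = some w := by
  simp [Matching.partnerM, pairMatching]

end Matching

section Profile

variable {M W : Type*} [Fintype M] [Fintype W] {P Q P' : Profile M W} {a : M ⊕ W}

protected lemma prefEq.refl (P : Profile M W) (a : M ⊕ W) : prefEq P P a := by
  cases a <;> rfl

protected lemma prefEq.symm (h : prefEq P Q a) : prefEq Q P a := by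
  cases a <;> exact Eq.symm h

protected lemma prefEq.trans (h : prefEq P Q a) (h' : prefEq Q P' a) : prefEq P P' a := by
  cases a <;> exact Eq.trans h h'

lemma prefEq.congr_left (h : prefEq P Q a) : prefEq P P' a ↔ prefEq Q P' a :=
  ⟨h.symm.trans, h.trans⟩

lemma prefEq.congr_right (h : prefEq P Q a) : prefEq P' P a ↔ prefEq P' Q a :=
  ⟨fun h' => h'.trans h, fun h' => h'.trans h.symm⟩

lemma prefEq.prank_eq (h : prefEq P Q a) (μ : Matching M W) : prank P μ a = prank Q μ a := by
  cases a <;> simp_all [prefEq, prank, mrank, wrank]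

lemma mem_interimEvent_prefEq_iff {A : Set (M ⊕ W)} (ha : a ∈ A) {P₀ Pt : Profile M W}
    (hPt : prefEq Pt P₀ a) :
    P ∈ interimEvent A (fun a => {P | prefEq P P₀ a}) a Pt ↔ ∀ a' ∈ A, prefEq P P₀ a' := by
  constructor
  · rintro ⟨hPa, hP⟩ a' ha'
    rcases eq_or_ne a' a with rfl | hne
    · exact hPa.trans hPt
    · exact hP a' ha' hne
  · exact fun h => ⟨(h a ha).trans hPt.symm, fun a' ha' _ => h a' ha'⟩

lemma prank_emptyMatching (P : Profile M W) (a : M ⊕ W) :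
    prank P (emptyMatching M W) a = urank P a := by
  cases a <;> rfl

lemma one_le_prank (P : Profile M W) (μ : Matching M W) (a : M ⊕ W) : 1 ≤ prank P μ a := by
  cases a <;> simp [prank, mrank, wrank]

lemma prank_le_of_card {n : ℕ} (hM : Fintype.card M = n) (hW : Fintype.card W = n)
    (P : Profile M W) (μ : Matching M W) (a : M ⊕ W) : prank P μ a ≤ n + 1 := by
  cases a with
  | inl m => exact hW ▸ (P.mpref m (μ.partnerM m)).isLt
  | inr w => exact hM ▸ (P.wpref w (μ.partnerW w)).isLt

lemma mrank_injective (P : Profile M W) (m : M) : Function.Injective (mrank P m) :=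
  (add_left_injective 1).comp (Fin.val_injective.comp (P.mpref m).injective)

lemma wrank_injective (P : Profile M W) (w : W) : Function.Injective (wrank P w) :=
  (add_left_injective 1).comp (Fin.val_injective.comp (P.wpref w).injective)

lemma IsPermutedProfile.forall_urank_eq_iff {σM : Equiv.Perm M} {σW : Equiv.Perm W}
    (h : IsPermutedProfile σM σW P Q) (n : ℕ) :
    (∀ a, urank P a = n) ↔ ∀ a, urank Q a = n := by
  obtain ⟨-, hm, -, hw⟩ := h
  simp only [Sum.forall, urank, mrank, wrank, ← hm, ← hw]
  rw [σM.forall_congr_left, σW.forall_congr_left]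
  simp only [Equiv.apply_symm_apply]

end Profile

section CDF

variable {M W : Type*} [Fintype M] [Fintype W] {P Q : Profile M W} {p : PMF (Matching M W)}
  {μ ν : Matching M W} {a : M ⊕ W}

lemma cdfAt_le_cdfAt_pure (h : ∀ μ ∈ p.support, prank Q ν a ≤ prank P μ a) (n : ℕ) :
    cdfAt P p a n ≤ cdfAt Q (PMF.pure ν) a n := by
  by_cases hn : prank Q ν a ≤ n
  · exact (prob_le_one _ _).trans_eq (prob_pure_of_mem (s := {μ | prank Q μ a ≤ n}) hn).symm
  · have hzero : cdfAt P p a n = 0 := by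
      rw [cdfAt, ← nonpos_iff_eq_zero, ← not_lt, prob_pos_iff]
      rintro ⟨μ, hμ, hμn⟩
      exact hn ((h μ hμ).trans hμn)
    exact hzero.trans_le zero_le

lemma cdfAt_pure_le_cdfAt (h : ∀ μ ∈ p.support, prank P μ a ≤ prank Q ν a) (n : ℕ) :
    cdfAt Q (PMF.pure ν) a n ≤ cdfAt P p a n := by
  by_cases hn : prank Q ν a ≤ n
  · exact (prob_le_one _ _).trans_eq (prob_eq_one_iff.2 fun μ hμ => (h μ hμ).trans hn).symm
  · exact (prob_pure_of_notMem (s := {μ | prank Q μ a ≤ n}) hn).trans_le zero_le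

lemma cdfAt_lt_cdfAt_pure (hμ : μ ∈ p.support) (h : prank Q ν a < prank P μ a) :
    cdfAt P p a (prank Q ν a) < cdfAt Q (PMF.pure ν) a (prank Q ν a) := by
  have hone : cdfAt Q (PMF.pure ν) a (prank Q ν a) = 1 :=
    prob_pure_of_mem (le_refl (prank Q ν a))
  rw [hone]
  exact prob_lt_one_iff.2 fun hsub => h.not_ge (hsub hμ)

lemma indicator_mul_cdfAt_le {ψ : PMF (Profile M W)} {Y : Set (Profile M W)}
    {φ φ' : Profile M W → PMF (Matching M W)} {n : ℕ} (s : Equiv.Perm (Profile M W))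
    (hsψ : ∀ P, ψ (s P) = ψ P) (hsY : ∀ P, s P ∈ Y ↔ P ∈ Y)
    (hle : ∀ P ∈ ψ.support, P ∈ Y → cdfAt P (φ P) a n ≤ cdfAt (s P) (φ' (s P)) a n)
    (P : Profile M W) :
    Y.indicator (fun P => ψ P * cdfAt P (φ P) a n) P ≤
      Y.indicator (fun P => ψ P * cdfAt P (φ' P) a n) (s P) := by
  by_cases hY : P ∈ Y
  · rw [Set.indicator_of_mem hY, Set.indicator_of_mem ((hsY P).2 hY), hsψ]
    by_cases hP : P ∈ ψ.support
    · gcongr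
      exact hle P hP hY
    · simp only [ψ.apply_eq_zero_iff P |>.2 hP, zero_mul, le_refl]
  · simp only [Set.indicator_of_notMem hY, zero_le]

end CDF

section Conditioning

variable {M W : Type*} [Fintype M] [DecidableEq M] [Fintype W] [DecidableEq W]
  {ψ : PMF (Profile M W)} {Y Z : Set (Profile M W)} {φ φ' : Mechanism M W} {a : M ⊕ W} {n : ℕ}

lemma tsum_indicator_mul_cdfAt_ne_top (ψ : PMF (Profile M W)) (Y : Set (Profile M W))
    (φ : Mechanism M W) (a : M ⊕ W) (n : ℕ) :
    ∑' P, Y.indicator (fun P => ψ P * cdfAt P (φ P) a n) P ≠ ⊤ := by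
  refine ne_top_of_le_ne_top ψ.tsum_coe_ne_top (ENNReal.tsum_le_tsum fun P => ?_)
  exact (Set.indicator_le_self _ _ _).trans (mul_le_of_le_one_right' (prob_le_one _ _))

lemma cdfCond_congr (h : ∀ P ∈ ψ.support, P ∈ Y ↔ P ∈ Z) (φ : Mechanism M W) (a : M ⊕ W)
    (n : ℕ) :
    cdfCond ψ Y φ a n = cdfCond ψ Z φ a n := by
  rw [cdfCond, cdfCond, prob_congr h]
  congr 1
  refine tsum_congr fun P => ?_
  by_cases hP : P ∈ ψ.support
  · exact Set.indicator_eq_indicator (h P hP) rfl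
  · simp only [Set.indicator, ψ.apply_eq_zero_iff P |>.2 hP, zero_mul, ite_self]

lemma cdfCond_le_of_perm (s : Equiv.Perm (Profile M W)) (hsψ : ∀ P, ψ (s P) = ψ P)
    (hsY : ∀ P, s P ∈ Y ↔ P ∈ Y)
    (hle : ∀ P ∈ ψ.support, P ∈ Y → cdfAt P (φ P) a n ≤ cdfAt (s P) (φ' (s P)) a n) :
    cdfCond ψ Y φ a n ≤ cdfCond ψ Y φ' a n := by
  rw [cdfCond, cdfCond, ← s.tsum_eq (Y.indicator fun P => ψ P * cdfAt P (φ' P) a n)]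
  exact ENNReal.div_le_div_right
    (ENNReal.tsum_le_tsum (indicator_mul_cdfAt_le s hsψ hsY hle)) _

lemma cdfCond_lt_of_perm (s : Equiv.Perm (Profile M W)) (hsψ : ∀ P, ψ (s P) = ψ P)
    (hsY : ∀ P, s P ∈ Y ↔ P ∈ Y)
    (hle : ∀ P ∈ ψ.support, P ∈ Y → cdfAt P (φ P) a n ≤ cdfAt (s P) (φ' (s P)) a n)
    {P₀ : Profile M W} (hP₀ : P₀ ∈ ψ.support) (hP₀Y : P₀ ∈ Y)
    (hlt : cdfAt P₀ (φ P₀) a n < cdfAt (s P₀) (φ' (s P₀)) a n) :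
    cdfCond ψ Y φ a n < cdfCond ψ Y φ' a n := by
  have hpos : 0 < prob ψ Y := prob_pos_iff.2 ⟨P₀, hP₀, hP₀Y⟩
  have hfin : prob ψ Y ≠ ⊤ := ne_top_of_le_ne_top ENNReal.one_ne_top (prob_le_one _ _)
  rw [cdfCond, cdfCond, ← s.tsum_eq (Y.indicator fun P => ψ P * cdfAt P (φ' P) a n)]
  refine ENNReal.div_lt_div_right hpos.ne' hfin (ENNReal.tsum_lt_tsum (i := P₀)
    (tsum_indicator_mul_cdfAt_ne_top ψ Y φ a n) (indicator_mul_cdfAt_le s hsψ hsY hle) ?_)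
  rw [Set.indicator_of_mem hP₀Y, Set.indicator_of_mem ((hsY P₀).2 hP₀Y), hsψ]
  exact ENNReal.mul_lt_mul_right hP₀ (ψ.apply_ne_top P₀) hlt

lemma sd_cdfCond_of_perm (s : Equiv.Perm (Profile M W)) (hsψ : ∀ P, ψ (s P) = ψ P)
    (hsY : ∀ P, s P ∈ Y ↔ P ∈ Y)
    (hle : ∀ P ∈ ψ.support, P ∈ Y → ∀ n, cdfAt P (φ P) a n ≤ cdfAt (s P) (φ' (s P)) a n)
    {P₀ : Profile M W} (hP₀ : P₀ ∈ ψ.support) (hP₀Y : P₀ ∈ Y)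
    (hlt : cdfAt P₀ (φ P₀) a n < cdfAt (s P₀) (φ' (s P₀)) a n) :
    SD (cdfCond ψ Y φ' a) (cdfCond ψ Y φ a) :=
  ⟨fun k => cdfCond_le_of_perm s hsψ hsY fun P hP hPY => hle P hP hPY k,
    n, cdfCond_lt_of_perm s hsψ hsY (fun P hP hPY => hle P hP hPY n) hP₀ hP₀Y hlt⟩

lemma not_sd_cdfCond
    (hle : ∀ P ∈ ψ.support, P ∈ Y → ∀ n, cdfAt P (φ' P) a n ≤ cdfAt P (φ P) a n) :
    ¬ SD (cdfCond ψ Y φ' a) (cdfCond ψ Y φ a) := by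
  rintro ⟨-, n, hn⟩
  exact hn.not_ge (cdfCond_le_of_perm (Equiv.refl _) (fun _ => rfl) (fun _ => Iff.rfl)
    fun P hP hPY => hle P hP hPY n)

end Conditioning

section Blocking

variable {M W : Type*} [Fintype M] [DecidableEq M] [Fintype W] [DecidableEq W]
  {ψ : PMF (Profile M W)} {φ : Mechanism M W}

/-- The coalition of everyone accepts every preference that occurs with positive probability, so
that acceptance conveys no information and `a` conditions on `a`'s own preferences alone. -/
lemma blocksInterim_univ [Nonempty (M ⊕ W)] (φ' : Mechanism M W)
    (hSD : ∀ a, ∀ P₀ ∈ ψ.support,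
      SD (cdfCond ψ {P | prefEq P P₀ a} φ' a) (cdfCond ψ {P | prefEq P P₀ a} φ a)) :
    BlocksInterim Set.univ φ ψ := by
  set R : M ⊕ W → Set (Profile M W) := fun a => {P | ∃ P₀ ∈ ψ.support, prefEq P P₀ a} with hR
  have support_subset (a) : ψ.support ⊆ R a := fun P hP => ⟨P, hP, prefEq.refl P a⟩
  refine ⟨Set.univ_nonempty, φ', R, ?_, ?_, ?_, ?_⟩
  · intro a P P' h
    simp only [hR, Set.mem_ofPred_eq, h.congr_left]
  · exact fun a _ P => prob_eq_one_iff.2 fun μ _ => Set.mem_univ (μ.toFun a)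
  · intro a _ Pt
    constructor
    · rintro ⟨P₀, hP₀, hPt⟩
      have hevent : ∀ P ∈ ψ.support,
          P ∈ interimEvent Set.univ R a Pt ↔ P ∈ {P | prefEq P P₀ a} := fun P hP =>
        (and_iff_left fun a' _ _ => support_subset a' hP).trans hPt.congr_right
      refine ⟨prob_pos_iff.2 ⟨P₀, hP₀, (hevent P₀ hP₀).2 (prefEq.refl P₀ a)⟩, ?_⟩
      simpa only [SD, cdfCond_congr hevent] using hSD a P₀ hP₀
    · rintro ⟨hpos, -⟩
      obtain ⟨P, hP, hPY⟩ := prob_pos_iff.1 hpos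
      exact ⟨P, hP, hPY.1.symm⟩
  · obtain ⟨P, hP⟩ := ψ.support_nonempty
    exact prob_pos_iff.2 ⟨P, hP, fun a _ => support_subset a hP⟩

open Classical in
/-- The mechanism implementing `ν` when the coalition `A` has its preferences of `P₀`, and leaving
everyone unmatched otherwise. -/
noncomputable def coalitionMechanism (A : Set (M ⊕ W)) (P₀ : Profile M W) (ν : Matching M W) :
    Mechanism M W :=
  fun P => PMF.pure (if ∀ a ∈ A, prefEq P P₀ a then ν else emptyMatching M W)

/-- If being unmatched is always the worst outcome, no agent whose preferences differ from those in
`P₀` gains from the deviation, which makes the acceptance sets self-enforcing. -/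
lemma blocksInterim_of_forall_prank_eq_one (hψ : ∀ P ∈ ψ.support, ∀ μ a, prank P μ a ≤ urank P a)
    {A : Set (M ⊕ W)} (hA : A.Nonempty) {P₀ : Profile M W} (hP₀ : P₀ ∈ ψ.support)
    {ν : Matching M W} (hνA : ∀ a ∈ A, ν.toFun a ∈ A) (hν : ∀ a ∈ A, prank P₀ ν a = 1)
    (hφ : ∀ a ∈ A, ∃ μ ∈ (φ P₀).support, prank P₀ μ a ≠ 1) : BlocksInterim A φ ψ := by
  classical
  refine ⟨hA, coalitionMechanism A P₀ ν, fun a => {P | prefEq P P₀ a}, fun a P P' h => h.congr_left,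
    fun a ha P => prob_pure_of_mem ?_, fun a ha Pt => ⟨fun hPt => ?_, fun ⟨_, hSD⟩ => ?_⟩,
    prob_pos_iff.2 ⟨P₀, hP₀, fun a _ => prefEq.refl P₀ a⟩⟩
  · split_ifs
    exacts [hνA a ha, ha]
  · have hevent {P} := mem_interimEvent_prefEq_iff (P := P) ha hPt
    have hP₀Y := hevent.2 fun a _ => prefEq.refl P₀ a
    obtain ⟨μ, hμ, hμa⟩ := hφ a ha
    refine ⟨prob_pos_iff.2 ⟨P₀, hP₀, hP₀Y⟩, sd_cdfCond_of_perm (Equiv.refl _) (fun _ => rfl)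
      (fun _ => Iff.rfl) (fun P _ hPY n => ?_) hP₀ hP₀Y (n := prank P₀ ν a) ?_⟩
    · have hP := hevent.1 hPY
      rw [Equiv.refl_apply, coalitionMechanism, if_pos hP]
      refine cdfAt_le_cdfAt_pure (fun μ _ => ?_) n
      rw [(hP a ha).prank_eq, hν a ha]
      exact one_le_prank P μ a
    · rw [Equiv.refl_apply, coalitionMechanism, if_pos fun a _ => prefEq.refl P₀ a]
      refine cdfAt_lt_cdfAt_pure hμ ?_
      rw [hν a ha]
      exact (one_le_prank P₀ μ a).lt_of_ne' hμa
  · by_contra hPt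
    refine not_sd_cdfCond (fun P hP hPY n => ?_) hSD
    rw [coalitionMechanism, if_neg fun h => hPt (hPY.1.symm.trans (h a ha))]
    refine cdfAt_pure_le_cdfAt (fun μ _ => ?_) n
    rw [prank_emptyMatching]
    exact hψ P hP μ a

lemma InterimStableAt.partnerM_eq_some (hφ : InterimStableAt φ ψ)
    (hψ : ∀ P ∈ ψ.support, ∀ μ a, prank P μ a ≤ urank P a) {P : Profile M W} (hP : P ∈ ψ.support)
    {m : M} {w : W} (hm : mrank P m (some w) = 1) (hw : wrank P w (some m) = 1)
    {μ : Matching M W} (hμ : μ ∈ (φ P).support) : μ.partnerM m = some w := by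
  have hpair := partnerM_pairMatching m w
  by_contra hne
  refine hφ {Sum.inl m, Sum.inr w} (blocksInterim_of_forall_prank_eq_one hψ
    (Set.insert_nonempty _ _) hP (ν := pairMatching m w) ?_ ?_ ?_)
  · rintro a (rfl | rfl) <;> simp [pairMatching]
  · rintro a (rfl | rfl)
    · rwa [prank, hpair]
    · rwa [prank, (Matching.partnerM_eq_some_iff _ m w).1 hpair]
  · rintro a (rfl | rfl) <;> refine ⟨μ, hμ, fun h => hne ?_⟩
    · exact mrank_injective P m (h.trans hm.symm)
    · exact (μ.partnerM_eq_some_iff m w).2 (wrank_injective P w (h.trans hw.symm))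

end Blocking

section Order

variable {X : Type*} [Fintype X] {n : ℕ}

/-- The preference listing the members of `X` in the order `e 0, e 1, …`, with remaining unmatched
last. -/
def prefOfOrder (e : Fin n ≃ X) : Option X ≃ Fin (Fintype.card X + 1) :=
  e.symm.optionCongr.trans (finSuccEquivLast.symm.trans
    (finCongr (congrArg (· + 1) (Fintype.card_fin n ▸ Fintype.card_congr e))))

lemma prefOfOrder_some (e : Fin n ≃ X) (x : X) : (prefOfOrder e (some x) : ℕ) = e.symm x :=
  congrArg Fin.val (finSuccEquivLast_symm_some (e.symm x))

lemma prefOfOrder_none (e : Fin n ≃ X) : (prefOfOrder e none : ℕ) = n :=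
  congrArg Fin.val finSuccEquivLast_symm_none

lemma prefOfOrder_injective :
    Function.Injective (prefOfOrder : (Fin n ≃ X) → (Option X ≃ Fin (Fintype.card X + 1))) := by
  intro e e' h
  refine Equiv.symm_bijective.injective (Equiv.ext fun x => Fin.ext ?_)
  rw [← prefOfOrder_some, ← prefOfOrder_some, h]

lemma exists_prefOfOrder_eq (hX : Fintype.card X = n) {q : Option X ≃ Fin (Fintype.card X + 1)}
    (hq : (q none : ℕ) = n) : ∃ e : Fin n ≃ X, prefOfOrder e = q := by
  set q' : Option X ≃ Option (Fin n) :=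
    q.trans ((finCongr (congrArg (· + 1) hX)).trans finSuccEquivLast) with hq'
  have hnone : q' none = none := by
    rw [← finSuccEquivLast_last]
    exact congrArg finSuccEquivLast (Fin.ext hq)
  have hcongr : q'.removeNone.optionCongr = q' := by
    ext1 o
    cases o with
    | none => exact hnone.symm
    | some x =>
      refine Equiv.removeNone_some q' (Option.ne_none_iff_exists'.1 fun h => ?_)
      exact Option.some_ne_none x (q'.injective (h.trans hnone.symm))
  refine ⟨q'.removeNone.symm, ?_⟩
  rw [prefOfOrder, Equiv.symm_symm, hcongr, hq']
  ext o
  simp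

end Order

section RolePref

open Equiv (swap)

variable {n : ℕ} {k l : Fin (n + 3)}

/-- The preference order over roles of an agent in role `k`, on either side of the market: position
`j` of the order is held by the agents in role `rolePref k j`. An agent in role `k ≠ 1` ranks role
`k` first, whereas role `1` ranks role `0` first and role `1` only third. -/
def rolePref (k : Fin (n + 3)) : Equiv.Perm (Fin (n + 3)) :=
  if k = 1 then swap 1 2 else swap 0 k

lemma rolePref_zero : rolePref (0 : Fin (n + 3)) = 1 := by
  simp [rolePref, Equiv.Perm.one_def]

lemma rolePref_one : rolePref (1 : Fin (n + 3)) = swap 1 2 := if_pos rfl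

lemma rolePref_apply_zero (hk : k ≠ 1) : rolePref k 0 = k := by
  rw [rolePref, if_neg hk, Equiv.swap_apply_left]

lemma rolePref_one_apply_zero : rolePref (1 : Fin (n + 3)) 0 = 0 := by
  rw [rolePref_one]
  exact Equiv.swap_apply_of_ne_of_ne zero_ne_one two_ne_zero.symm

lemma eq_zero_one_of_rolePref_apply_zero_eq (hne : k ≠ l) (h : rolePref k 0 = rolePref l 0) :
    k = 0 ∧ l = 1 ∨ k = 1 ∧ l = 0 := by
  by_cases hk : k = 1
  · subst hk
    rw [rolePref_one_apply_zero, rolePref_apply_zero hne.symm] at h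
    exact Or.inr ⟨rfl, h.symm⟩
  · by_cases hl : l = 1
    · subst hl
      rw [rolePref_one_apply_zero, rolePref_apply_zero hne] at h
      exact Or.inl ⟨h, rfl⟩
    · rw [rolePref_apply_zero hk, rolePref_apply_zero hl] at h
      exact absurd h hne

lemma eq_one_of_mul_rolePref_eq {κ ρ : Equiv.Perm (Fin (n + 3))}
    (hρ : ∀ k, ρ * rolePref k = rolePref (κ k)) (hκ : ∀ k, κ * rolePref k = rolePref (ρ k)) :
    κ = 1 ∧ ρ = 1 := by
  have swap_or_fix {κ ρ : Equiv.Perm (Fin (n + 3))} (h : ∀ k, ρ * rolePref k = rolePref (κ k)) :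
      κ 0 = 0 ∧ κ 1 = 1 ∨ κ 0 = 1 ∧ κ 1 = 0 := by
    refine eq_zero_one_of_rolePref_apply_zero_eq (κ.injective.ne (by simp)) ?_
    rw [← h, ← h, Equiv.Perm.mul_apply, Equiv.Perm.mul_apply, rolePref_one_apply_zero,
      rolePref_zero, Equiv.Perm.one_apply]
  have hρ₀ : ρ = rolePref (κ 0) := by rw [← hρ, rolePref_zero, mul_one]
  have hκ₀ : κ = rolePref (ρ 0) := by rw [← hκ, rolePref_zero, mul_one]
  obtain ⟨h₀, -⟩ | ⟨h₀, -⟩ := swap_or_fix hρ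
  · have hρ_one : ρ = 1 := by rw [hρ₀, h₀, rolePref_zero]
    exact ⟨by rw [hκ₀, hρ_one, Equiv.Perm.one_apply, rolePref_zero], hρ_one⟩
  · have hρ₁ : ρ 1 = 2 := by rw [hρ₀, h₀, rolePref_one, Equiv.swap_apply_left]
    obtain ⟨-, h⟩ | ⟨-, h⟩ := swap_or_fix hκ
    · exact absurd (hρ₁.symm.trans h) (Fin.ne_of_val_ne (by decide : 2 ≠ 1))
    · exact absurd (hρ₁.symm.trans h) two_ne_zero

end RolePref

section Labeling

open Equiv (swap)

variable {n : ℕ} {M W : Type*}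

/-- A distribution of the roles `0, …, n + 2` among the agents of each side of the market. -/
abbrev Labeling (n : ℕ) (M W : Type*) := (Fin (n + 3) ≃ M) × (Fin (n + 3) ≃ W)

namespace Labeling

/-- The role of an agent under a labeling. -/
def role (L : Labeling n M W) : M ⊕ W → Fin (n + 3)
  | Sum.inl m => L.1.symm m
  | Sum.inr w => L.2.symm w

/-- The perfect matching pairing equal roles, except that role `0` is paired with role `1`. -/
def exchange (L : Labeling n M W) : Matching M W :=
  matchingOf ((L.1.symm.trans (swap 0 1)).trans L.2)

/-- The labeling in which agents of roles `0` and `1` on the side of `a` exchange roles, and the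
roles of the other side are permuted so that `a` keeps his or her preferences over agents. -/
def exchangeRoles (a : M ⊕ W) (L : Labeling n M W) : Labeling n M W :=
  let reorder := (rolePref (swap 0 1 (L.role a))).symm.trans (rolePref (L.role a))
  match a with
  | Sum.inl _ => ((swap 0 1).trans L.1, reorder.trans L.2)
  | Sum.inr _ => (reorder.trans L.1, (swap 0 1).trans L.2)

lemma role_exchangeRoles (a : M ⊕ W) (L : Labeling n M W) :
    (L.exchangeRoles a).role a = swap 0 1 (L.role a) := by
  cases a <;> simp [role, exchangeRoles]

lemma exchangeRoles_involutive (a : M ⊕ W) :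
    Function.Involutive (exchangeRoles a : Labeling n M W → Labeling n M W) := by
  intro L
  cases a <;> ext k <;> simp [exchangeRoles, role]

lemma role_eq_one_iff_of_partnerM_eq_some (L : Labeling n M W) {μ : Matching M W}
    (hμ : ∀ k ≠ 1, μ.partnerM (L.1 k) = some (L.2 k)) {m : M} {w : W}
    (h : μ.partnerM m = some w) : L.1.symm m = 1 ↔ L.2.symm w = 1 := by
  rw [← not_iff_not]
  constructor <;> intro hne <;> have hk := hμ _ hne
  · rw [Equiv.apply_symm_apply, h, Option.some_inj] at hk
    rwa [hk, Equiv.symm_apply_apply]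
  · rw [Equiv.apply_symm_apply, μ.partnerM_eq_some_iff, (μ.partnerM_eq_some_iff m w).1 h,
      Option.some_inj] at hk
    rwa [hk, Equiv.symm_apply_apply]

variable [Fintype M] [Fintype W]

/-- The profile in which the agents have the preferences of their roles and rank remaining
unmatched last. -/
def profile (L : Labeling n M W) : Profile M W where
  mpref m := prefOfOrder ((rolePref (L.1.symm m)).trans L.2)
  wpref w := prefOfOrder ((rolePref (L.2.symm w)).trans L.1)

lemma mrank_profile_some (L : Labeling n M W) (m : M) (w : W) :
    mrank L.profile m (some w) = ((rolePref (L.1.symm m)).symm (L.2.symm w) : ℕ) + 1 :=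
  congrArg (· + 1) (prefOfOrder_some _ w)

lemma wrank_profile_some (L : Labeling n M W) (w : W) (m : M) :
    wrank L.profile w (some m) = ((rolePref (L.2.symm w)).symm (L.1.symm m) : ℕ) + 1 :=
  congrArg (· + 1) (prefOfOrder_some _ m)

lemma urank_profile (L : Labeling n M W) (a : M ⊕ W) : urank L.profile a = n + 4 := by
  cases a <;> exact congrArg (· + 1) (prefOfOrder_none _)

lemma profile_injective : Function.Injective (profile : Labeling n M W → Profile M W) := by
  rintro ⟨σ, τ⟩ ⟨σ', τ'⟩ h
  have hm (m) : (rolePref (σ.symm m)).trans τ = (rolePref (σ'.symm m)).trans τ' :=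
    prefOfOrder_injective (congrFun (congrArg Profile.mpref h) m)
  have hw (w) : (rolePref (τ.symm w)).trans σ = (rolePref (τ'.symm w)).trans σ' :=
    prefOfOrder_injective (congrFun (congrArg Profile.wpref h) w)
  obtain ⟨hσ, hτ⟩ := eq_one_of_mul_rolePref_eq (κ := σ.trans σ'.symm) (ρ := τ.trans τ'.symm)
    (fun k => Equiv.ext fun j => by
      simpa [Equiv.symm_apply_eq] using Equiv.congr_fun (hm (σ k)) j)
    (fun k => Equiv.ext fun j => by
      simpa [Equiv.symm_apply_eq] using Equiv.congr_fun (hw (τ k)) j)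
  congr 1
  · exact Equiv.ext fun k => (Equiv.symm_apply_eq _).1 (Equiv.congr_fun hσ k)
  · exact Equiv.ext fun k => (Equiv.symm_apply_eq _).1 (Equiv.congr_fun hτ k)

lemma isPermutedProfile_profile (L L' : Labeling n M W) :
    IsPermutedProfile (L.1.symm.trans L'.1) (L.2.symm.trans L'.2) L.profile L'.profile := by
  refine ⟨fun m w => ?_, fun m => ?_, fun w m => ?_, fun w => ?_⟩ <;> apply Fin.ext <;>
    simp [profile, prefOfOrder_some, prefOfOrder_none]

lemma prefEq_profile_exchangeRoles (a : M ⊕ W) (L : Labeling n M W) :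
    prefEq (L.exchangeRoles a).profile L.profile a := by
  cases a <;> refine congrArg prefOfOrder ?_ <;> ext k <;> simp [exchangeRoles, role]

lemma exists_prefEq_profile (hM : Fintype.card M = n + 3) (hW : Fintype.card W = n + 3)
    {P : Profile M W} {a : M ⊕ W} (hP : urank P a = n + 4) (k : Fin (n + 3)) :
    ∃ L : Labeling n M W, prefEq L.profile P a ∧ L.role a = k := by
  have eM : Fin (n + 3) ≃ M := (Fintype.equivFinOfCardEq hM).symm
  have eW : Fin (n + 3) ≃ W := (Fintype.equivFinOfCardEq hW).symm
  cases a with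
  | inl m =>
    obtain ⟨e, he⟩ := exists_prefOfOrder_eq hW (Nat.succ_injective hP)
    refine ⟨((swap k (eM.symm m)).trans eM, (rolePref k).symm.trans e), ?_, by simp [role]⟩
    refine Eq.trans (congrArg prefOfOrder ?_) he
    ext; simp
  | inr w =>
    obtain ⟨e, he⟩ := exists_prefOfOrder_eq hM (Nat.succ_injective hP)
    refine ⟨((rolePref k).symm.trans e, (swap k (eW.symm w)).trans eW), ?_, by simp [role]⟩
    refine Eq.trans (congrArg prefOfOrder ?_) he
    ext; simp

lemma mrank_profile_eq_one (L : Labeling n M W) {k : Fin (n + 3)} (hk : k ≠ 1) :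
    mrank L.profile (L.1 k) (some (L.2 k)) = 1 := by
  simp [mrank_profile_some, Equiv.symm_apply_eq, rolePref_apply_zero hk]

lemma wrank_profile_eq_one (L : Labeling n M W) {k : Fin (n + 3)} (hk : k ≠ 1) :
    wrank L.profile (L.2 k) (some (L.1 k)) = 1 := by
  simp [wrank_profile_some, Equiv.symm_apply_eq, rolePref_apply_zero hk]

lemma three_le_prank_profile (L : Labeling n M W) {μ : Matching M W}
    (hμ : ∀ k ≠ 1, μ.partnerM (L.1 k) = some (L.2 k)) {a : M ⊕ W} (ha : L.role a = 1) :
    3 ≤ prank L.profile μ a := by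
  have hrank : ((rolePref (1 : Fin (n + 3))).symm 1 : ℕ) + 1 = 3 := by simp [rolePref_one]
  have hnone : 3 ≤ urank L.profile a := by rw [urank_profile]; omega
  cases a with
  | inl m =>
    rw [prank]
    cases hp : μ.partnerM m with
    | none => exact hnone
    | some w =>
      have hw := (L.role_eq_one_iff_of_partnerM_eq_some hμ hp).1 ha
      rw [mrank_profile_some, show L.1.symm m = 1 from ha, hw, hrank]
  | inr w =>
    rw [prank]
    cases hp : μ.partnerW w with
    | none => exact hnone
    | some m =>
      have hm := (L.role_eq_one_iff_of_partnerM_eq_some hμ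
        ((μ.partnerM_eq_some_iff m w).2 hp)).2 ha
      rw [wrank_profile_some, show L.2.symm w = 1 from ha, hm, hrank]

lemma prank_profile_exchange (L : Labeling n M W) (a : M ⊕ W) :
    prank L.profile L.exchange a = if L.role a = 0 then 2 else 1 := by
  have hrank (k : Fin (n + 3)) :
      ((rolePref k).symm (swap 0 1 k) : ℕ) + 1 = if k = 0 then 2 else 1 := by
    split_ifs with h₀
    · rw [h₀, rolePref_zero, Equiv.swap_apply_left]
      rfl
    · by_cases h₁ : k = 1
      · simp [h₁, Equiv.symm_apply_eq, rolePref_one_apply_zero]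
      · simp [Equiv.swap_apply_of_ne_of_ne h₀ h₁, Equiv.symm_apply_eq, rolePref_apply_zero h₁]
  cases a with
  | inl m =>
    rw [prank, exchange, partnerM_matchingOf, mrank_profile_some, ← hrank]
    simp [role]
  | inr w =>
    rw [prank, exchange, partnerW_matchingOf, wrank_profile_some, ← hrank]
    simp [role]

lemma prank_exchange_exchangeRoles_le (L : Labeling n M W) {μ : Matching M W}
    (hμ : ∀ k ≠ 1, μ.partnerM (L.1 k) = some (L.2 k)) (a : M ⊕ W) :
    prank (L.exchangeRoles a).profile (L.exchangeRoles a).exchange a ≤ prank L.profile μ a := by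
  rw [prank_profile_exchange, role_exchangeRoles]
  by_cases ha : L.role a = 1
  · rw [ha, Equiv.swap_apply_right, if_pos rfl]
    exact (Nat.le_succ 2).trans (L.three_le_prank_profile hμ ha)
  · rw [if_neg fun h => ha ((Equiv.swap_apply_eq_iff.1 h).trans (Equiv.swap_apply_left 0 1))]
    exact one_le_prank _ _ a

end Labeling

end Labeling

section Exchange

variable {n : ℕ} {M W : Type*} [Fintype M] [Fintype W]

namespace Labeling

/-- The relabeling `exchangeRoles a` acting on profiles; it fixes every profile that is not of the
form `L.profile`. -/
noncomputable def exchangeProfile (n : ℕ) (a : M ⊕ W) : Equiv.Perm (Profile M W) :=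
  (exchangeRoles_involutive a).toPerm.viaEmbedding ⟨profile (n := n), profile_injective⟩

lemma exchangeProfile_profile (a : M ⊕ W) (L : Labeling n M W) :
    exchangeProfile n a L.profile = (L.exchangeRoles a).profile :=
  Equiv.Perm.viaEmbedding_apply _ ⟨profile, profile_injective⟩ L

lemma exchangeProfile_of_notMem (a : M ⊕ W) {P : Profile M W}
    (hP : P ∉ Set.range (profile : Labeling n M W → Profile M W)) : exchangeProfile n a P = P :=
  Equiv.Perm.viaEmbedding_apply_of_notMem _ ⟨profile, profile_injective⟩ P hP

lemma prefEq_exchangeProfile (n : ℕ) (a : M ⊕ W) (P : Profile M W) :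
    prefEq (exchangeProfile n a P) P a := by
  by_cases hP : P ∈ Set.range (profile : Labeling n M W → Profile M W)
  · obtain ⟨L, rfl⟩ := hP
    rw [exchangeProfile_profile]
    exact prefEq_profile_exchangeRoles a L
  · rw [exchangeProfile_of_notMem a hP]
    exact prefEq.refl P a

lemma apply_exchangeProfile {ψ : PMF (Profile M W)}
    (hψ : ∀ L L' : Labeling n M W, ψ L.profile = ψ L'.profile) (a : M ⊕ W) (P : Profile M W) :
    ψ (exchangeProfile n a P) = ψ P := by
  by_cases hP : P ∈ Set.range (profile : Labeling n M W → Profile M W)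
  · obtain ⟨L, rfl⟩ := hP
    rw [exchangeProfile_profile]
    exact hψ _ L
  · rw [exchangeProfile_of_notMem a hP]

variable [DecidableEq M] [DecidableEq W] {φ : Mechanism M W}

/-- The deviation of the grand coalition: `L.exchange` at a profile `L.profile`, and `φ` at all
other profiles. -/
noncomputable def exchangeMechanism (n : ℕ) (φ : Mechanism M W) : Mechanism M W :=
  Function.extend (profile (n := n)) (fun L => PMF.pure L.exchange) φ

lemma exchangeMechanism_profile (φ : Mechanism M W) (L : Labeling n M W) :
    exchangeMechanism n φ L.profile = PMF.pure L.exchange :=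
  profile_injective.extend_apply _ φ L

lemma exchangeMechanism_of_notMem (φ : Mechanism M W) {P : Profile M W}
    (hP : P ∉ Set.range (profile : Labeling n M W → Profile M W)) :
    exchangeMechanism n φ P = φ P :=
  Function.extend_apply' _ φ P hP

variable (hφ : ∀ L : Labeling n M W, ∀ μ ∈ (φ L.profile).support, ∀ k ≠ 1,
  μ.partnerM (L.1 k) = some (L.2 k))

include hφ

lemma cdfAt_le_cdfAt_exchangeProfile (a : M ⊕ W) (P : Profile M W) (k : ℕ) :
    cdfAt P (φ P) a k ≤
      cdfAt (exchangeProfile n a P) (exchangeMechanism n φ (exchangeProfile n a P)) a k := by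
  by_cases hP : P ∈ Set.range (profile : Labeling n M W → Profile M W)
  · obtain ⟨L, rfl⟩ := hP
    rw [exchangeProfile_profile, exchangeMechanism_profile]
    exact cdfAt_le_cdfAt_pure (fun μ hμ => L.prank_exchange_exchangeRoles_le (hφ L μ hμ) a) k
  · rw [exchangeProfile_of_notMem a hP, exchangeMechanism_of_notMem φ hP]

lemma cdfAt_lt_cdfAt_exchangeProfile {a : M ⊕ W} {L : Labeling n M W} (ha : L.role a = 1) :
    cdfAt L.profile (φ L.profile) a 2 < cdfAt (exchangeProfile n a L.profile)
      (exchangeMechanism n φ (exchangeProfile n a L.profile)) a 2 := by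
  obtain ⟨μ, hμ⟩ := (φ L.profile).support_nonempty
  have htwo : prank (L.exchangeRoles a).profile (L.exchangeRoles a).exchange a = 2 := by
    rw [prank_profile_exchange, role_exchangeRoles, ha, Equiv.swap_apply_right, if_pos rfl]
  have hlt := cdfAt_lt_cdfAt_pure (Q := (L.exchangeRoles a).profile)
    (ν := (L.exchangeRoles a).exchange) hμ (htwo.trans_lt (L.three_le_prank_profile (hφ L μ hμ) ha))
  rwa [htwo, ← exchangeMechanism_profile φ, ← exchangeProfile_profile] at hlt

lemma blocksInterim_univ_of_partnerM {ψ : PMF (Profile M W)} (hM : Fintype.card M = n + 3)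
    (hW : Fintype.card W = n + 3) (hsupp : ∀ P ∈ ψ.support, ∀ a, urank P a = n + 4)
    (hmem : ∀ L : Labeling n M W, L.profile ∈ ψ.support)
    (hψ : ∀ L L' : Labeling n M W, ψ L.profile = ψ L'.profile) :
    BlocksInterim Set.univ φ ψ := by
  have : Nonempty M := Fintype.card_pos_iff.1 (by omega)
  refine blocksInterim_univ (exchangeMechanism n φ) fun a P₀ hP₀ => ?_
  obtain ⟨L, hL, ha⟩ := exists_prefEq_profile hM hW (hsupp P₀ hP₀ a) 1
  exact sd_cdfCond_of_perm (exchangeProfile n a) (apply_exchangeProfile hψ a)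
    (fun P => (prefEq_exchangeProfile n a P).congr_left)
    (fun P _ _ k => cdfAt_le_cdfAt_exchangeProfile hφ a P k) (hmem L) hL
    (cdfAt_lt_cdfAt_exchangeProfile hφ ha)

end Labeling

end Exchange

theorem no_mechanism_interimStable_at_uniform_general {n : ℕ} (hn : 3 ≤ n) {M W : Type*}
    [Fintype M] [DecidableEq M] [Fintype W] [DecidableEq W]
    (hM : Fintype.card M = n) (hW : Fintype.card W = n) {ψ : PMF (Profile M W)}
    (hsupp : ∀ P, P ∈ ψ.support ↔ ∀ a, urank P a = n + 1)
    (hsymm : ∀ σM σW P P', IsPermutedProfile σM σW P P' → ψ P = ψ P') (φ : Mechanism M W) :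
    ¬ InterimStableAt φ ψ := by
  intro hφ
  obtain ⟨k, rfl⟩ := Nat.exists_eq_add_of_le' hn
  have hmem (L : Labeling k M W) : L.profile ∈ ψ.support := (hsupp _).2 L.urank_profile
  have hlast : ∀ P ∈ ψ.support, ∀ μ a, prank P μ a ≤ urank P a := fun P hP μ a =>
    (prank_le_of_card hM hW P μ a).trans_eq ((hsupp P).1 hP a).symm
  refine hφ Set.univ (Labeling.blocksInterim_univ_of_partnerM (fun L μ hμ r hr => ?_) hM hW
    (fun P => (hsupp P).1) hmem fun L L' => hsymm _ _ _ _ (L.isPermutedProfile_profile L'))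
  exact hφ.partnerM_eq_some hlast (hmem L) (L.mrank_profile_eq_one hr) (L.wrank_profile_eq_one hr)
    hμ

/-- With three men and three women and `ψ` the uniform prior over
the `(3!)^6 = 46656` preference profiles in which every agent ranks being unmatched
last, no mechanism is interim stable at `ψ`. -/
theorem no_mechanism_interimStable_at_uniform (M W : Type*)
    [Fintype M] [DecidableEq M] [Fintype W] [DecidableEq W]
    (hM : Fintype.card M = 3) (hW : Fintype.card W = 3)
    (ψ : PMF (Profile M W))
    (hψ : ∀ P : Profile M W,
      ψ P = if ∀ a : M ⊕ W, urank P a = 4 then (46656 : ℝ≥0∞)⁻¹ else 0)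
    (φ : Mechanism M W) :
    ¬ InterimStableAt φ ψ :=
  no_mechanism_interimStable_at_uniform_general le_rfl hM hW
    (fun P => by simp [PMF.mem_support_iff, hψ])
    (fun _ _ _ _ h => by simp only [hψ, h.forall_urank_eq_iff]) φ

end Unraveling
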